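/- Let m be a positive integer and v ∈ F^n. If Ω' is a finite set of monomials x^i y^j z^k of R[z] (with 0 ≤ j ≤ q−1) such that |Ω'| > n·m(m+1)/2, then there exist coefficients c_φ ∈ F, not all zero, such that Σ_{φ ∈ Ω'} c_φ φ lies in the ideal I_{v,m} = ⟨z − h_v, η⟩^m of R[z]. -/

import Mathlib

set_option synthInstance.maxHeartbeats 1000000
set_option maxHeartbeats 1000000

open MvPolynomial

/-- The polynomial `H_i ∈ F[X,Y]` attached to the rational point `(α, β)` of the Hermitian
curve: `H = −∏_{a ∈ F, a ≠ α} (X − a) · ∏_{b ∈ F, b ≠ β, b^q + b = β^q + β} (Y − b)`. -/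
noncomputable def Hpoly (q : ℕ) {F : Type*} [Field F] [Fintype F] [DecidableEq F]
    (α β : F) : MvPolynomial (Fin 2) F :=
  -((∏ a ∈ Finset.univ.erase α, (X 0 - C a)) *
    ∏ b ∈ (Finset.univ.filter fun b : F => b ^ q + b = β ^ q + β).erase β, (X 1 - C b))

/-!
The ring `R[z] ⧸ ⟨z - h, η⟩ ≅ R ⧸ ⟨η⟩` is spanned over `F` by the `q³` monomials `x^i y^j` with
`i < q²` and `j < q`: `y` is integral of degree `q` over `F[x]`, and `η` is monic of degree `q²`
in `x`. If `W` is their span and `T` the `F`-span of `f = z - h` and `g = η`, this says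
`⊤ = W + T * ⊤` in the semiring of `F`-submodules of `A = R[z]`. Iterating gives
`⊤ = W * (1 + T + ⋯ + T ^ (m - 1)) + T ^ m * ⊤`, and `T ^ m * ⊤` is the ideal `⟨f, g⟩ ^ m`. As
`T ^ k` is spanned by the `k + 1` products `f ^ i * g ^ j` with `i + j = k`, the quotient
`A ⧸ ⟨f, g⟩ ^ m` is spanned by `q³ * (1 + ⋯ + m)` elements, so any larger family in it is linearly
dependent.
-/

section SpanningSets

open Finset Submodule
open scoped Pointwise

lemma eq_mul_geom_sum_add_pow_mul {S : Type*} [CommSemiring S] {x w t : S}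
    (h : x = w + t * x) (m : ℕ) : x = w * ∑ k ∈ range m, t ^ k + t ^ m * x := by
  induction m with
  | zero => simp
  | succ m ih =>
    calc x = w * ∑ k ∈ range m, t ^ k + t ^ m * (w + t * x) := by rwa [← h]
      _ = w * ∑ k ∈ range (m + 1), t ^ k + t ^ (m + 1) * x := by
        rw [sum_range_succ]; ring

lemma sum_range_add_one_eq_choose_two (m : ℕ) :
    ∑ k ∈ range m, (k + 1) = (m + 1).choose 2 := by
  rw [Nat.choose_two_right, ← sum_range_id, sum_range_succ', add_zero]

lemma card_pair_pow_le {M : Type*} [CommMonoid M] [DecidableEq M] (f g : M) (k : ℕ) :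
    #(({f, g} : Finset M) ^ k) ≤ k + 1 := by
  have pow_subset : ({f, g} : Finset M) ^ k ⊆
      (HasAntidiagonal.antidiagonal k).image fun p => f ^ p.1 * g ^ p.2 := by
    induction k with
    | zero => rw [pow_zero, one_subset]; simp
    | succ k ih =>
      rw [pow_succ', mul_subset_iff]
      intro a ha b hb
      obtain ⟨⟨i, j⟩, hij, rfl⟩ := mem_image.1 (ih hb)
      rw [HasAntidiagonal.mem_antidiagonal] at hij
      rw [mem_insert, mem_singleton] at ha
      simp only [mem_image, HasAntidiagonal.mem_antidiagonal]
      obtain rfl | rfl := ha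
      · exact ⟨(i + 1, j), by grind, by rw [pow_succ', mul_assoc]⟩
      · exact ⟨(i, j + 1), by grind, by rw [pow_succ', mul_left_comm]⟩
  calc #(({f, g} : Finset M) ^ k) ≤ #(HasAntidiagonal.antidiagonal k) :=
        (card_le_card pow_subset).trans card_image_le
    _ = k + 1 := Finset.Nat.card_antidiagonal k

lemma exists_sum_smul_mem_of_span_sup_eq_top {F M ι : Type*} [Ring F] [StrongRankCondition F]
    [AddCommGroup M] [Module F M] {N : Submodule F M} {B : Finset M}
    (hB : span F (B : Set M) ⊔ N = ⊤) (u : ι → M) {s : Finset ι} (hs : #B < #s) :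
    ∃ c : ι → F, (∃ i ∈ s, c i ≠ 0) ∧ ∑ i ∈ s, c i • u i ∈ N := by
  classical
  have span_image : span F (B.image N.mkQ : Set (M ⧸ N)) = ⊤ := by
    rw [coe_image, ← map_span, map_mkQ_eq_top, sup_comm, hB]
  have dependent : ¬ LinearIndepOn F (fun i => N.mkQ (u i)) (s : Set ι) := fun indep => by
    have card_le : #s ≤ #(B.image N.mkQ) := by
      simpa using linearIndependent_le_span_finset _ indep _ span_image
    exact (card_le.trans card_image_le).not_gt hs
  simp only [linearIndepOn_finset_iff, not_forall] at dependent
  obtain ⟨c, hc, i, hi, hci⟩ := dependent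
  refine ⟨c, ⟨i, hi, hci⟩, ?_⟩
  rw [← N.ker_mkQ, LinearMap.mem_ker]
  simpa only [map_sum, map_smul] using hc

section Semiring

variable {F A : Type*} [CommSemiring F] [CommSemiring A] [Algebra F A]

lemma restrictScalars_ideal_span (s : Set A) :
    (Ideal.span s).restrictScalars F = span F s * ⊤ := by
  rw [mul_comm, ← span_univ, span_mul_span]
  exact (span_smul_of_span_eq_top span_univ s).symm

lemma restrictScalars_ideal_span_pow (s : Set A) (m : ℕ) :
    (Ideal.span s ^ m).restrictScalars F = span F s ^ m * ⊤ := by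
  rw [Ideal.span, span_pow, span_pow, ← restrictScalars_ideal_span, Ideal.span]

lemma sum_range_span_pow [DecidableEq A] (s : Finset A) (m : ℕ) :
    ∑ k ∈ range m, span F (s : Set A) ^ k = span F ((range m).biUnion (s ^ ·) : Set A) := by
  induction m with
  | zero => simp
  | succ m ih =>
    rw [sum_range_succ, ih, range_add_one, biUnion_insert, union_comm, coe_union, span_union,
      span_pow, Finset.coe_pow, Submodule.add_eq_sup]

lemma span_mul_biUnion_pow_sup_pow_eq_top [DecidableEq A] {B s : Finset A}
    (hB : span F (B : Set A) ⊔ (Ideal.span (s : Set A)).restrictScalars F = ⊤) (m : ℕ) :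
    span F ((B * (range m).biUnion (s ^ ·) : Finset A) : Set A) ⊔
      (Ideal.span (s : Set A) ^ m).restrictScalars F = ⊤ := by
  rw [restrictScalars_ideal_span, ← Submodule.add_eq_sup] at hB
  rw [restrictScalars_ideal_span_pow, Finset.coe_mul, ← span_mul_span, ← sum_range_span_pow,
    ← Submodule.add_eq_sup]
  exact (eq_mul_geom_sum_add_pow_mul hB.symm m).symm

end Semiring

section Ring

variable {F A : Type*} [CommRing F] [CommRing A] [Algebra F A]

lemma exists_sum_smul_mem_span_pair_pow [Nontrivial F] {ι : Type*} {f g : A} {B : Finset A}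
    (hB : span F (B : Set A) ⊔ (Ideal.span {f, g}).restrictScalars F = ⊤) (m : ℕ) (u : ι → A)
    {s : Finset ι} (hs : #B * (m + 1).choose 2 < #s) :
    ∃ c : ι → F, (∃ i ∈ s, c i ≠ 0) ∧ ∑ i ∈ s, c i • u i ∈ Ideal.span {f, g} ^ m := by
  classical
  let E : Finset A := (range m).biUnion (({f, g} : Finset A) ^ ·)
  have card_E : #E ≤ (m + 1).choose 2 := calc
    #E ≤ ∑ k ∈ range m, #(({f, g} : Finset A) ^ k) := card_biUnion_le
    _ ≤ ∑ k ∈ range m, (k + 1) := sum_le_sum fun k _ => card_pair_pow_le f g k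
    _ = (m + 1).choose 2 := sum_range_add_one_eq_choose_two m
  rw [← coe_pair] at hB ⊢
  refine exists_sum_smul_mem_of_span_sup_eq_top (span_mul_biUnion_pow_sup_pow_eq_top hB m) u ?_
  calc #(B * E) ≤ #B * #E := card_mul_le
    _ ≤ #B * (m + 1).choose 2 := Nat.mul_le_mul_left _ card_E
    _ < #s := hs

lemma restrictScalars_span_subalgebra (S : Subalgebra F A) (t : Set A) :
    (span S t).restrictScalars F = Subalgebra.toSubmodule S * span F t := by
  have univ_smul : (Set.univ : Set S) • t = (S : Set A) * t := by
    ext a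
    simp [Set.mem_smul, Set.mem_mul, Algebra.smul_def]
  rw [← span_smul_of_span_eq_top (span_univ (R := F)) t, univ_smul, ← span_mul_span,
    ← Subalgebra.coe_toSubmodule, span_eq]

lemma adjoin_pair_eq_adjoin_mul_span_pow {x y : A} {g : Polynomial (Algebra.adjoin F {x})}
    (hg : g.Monic) (hgy : Polynomial.aeval y g = 0) :
    Subalgebra.toSubmodule (Algebra.adjoin F {x, y}) =
      Subalgebra.toSubmodule (Algebra.adjoin F {x}) *
        span F ((y ^ ·) '' (range g.natDegree : Set ℕ)) := by
  classical
  rw [← restrictScalars_span_subalgebra, ← coe_image, span_range_natDegree_eq_adjoin hg hgy,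
    Set.insert_eq, Algebra.adjoin_union_eq_adjoin_adjoin, Subalgebra.restrictScalars_toSubmodule]

lemma adjoin_singleton_le_span_pow_sup {x : A} {f : Polynomial F} (hf : f.Monic) {J : Ideal A}
    (hfx : Polynomial.aeval x f ∈ J) :
    Subalgebra.toSubmodule (Algebra.adjoin F {x}) ≤
      span F ((x ^ ·) '' (range f.natDegree : Set ℕ)) ⊔ J.restrictScalars F := by
  let π := Ideal.Quotient.mkₐ F J
  have hfπ : Polynomial.aeval (π x) f = 0 := by
    rw [Polynomial.aeval_algHom_apply]
    exact Ideal.Quotient.eq_zero_iff_mem.2 hfx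
  have ker_π : LinearMap.ker π.toLinearMap = J.restrictScalars F := by
    ext a
    exact Ideal.Quotient.eq_zero_iff_mem
  rw [← ker_π, ← comap_map_eq, ← map_le_iff_le_comap, ← Subalgebra.map_toSubmodule,
    AlgHom.map_adjoin_singleton, ← span_range_natDegree_eq_adjoin hf hfπ, map_span]
  simp [Set.image_image]

lemma span_pow_mul_pow_sup_eq_top {x y : A} (hxy : Algebra.adjoin F {x, y} = ⊤)
    {f : Polynomial F} (hf : f.Monic) {J : Ideal A} (hfx : Polynomial.aeval x f ∈ J)
    {g : Polynomial (Algebra.adjoin F {x})} (hg : g.Monic) (hgy : Polynomial.aeval y g = 0) :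
    span F ((x ^ ·) '' (range f.natDegree : Set ℕ) * (y ^ ·) '' (range g.natDegree : Set ℕ)) ⊔
      J.restrictScalars F = ⊤ := by
  have J_mul_le (N : Submodule F A) : J.restrictScalars F * N ≤ J.restrictScalars F :=
    mul_le.2 fun a ha b _ => J.mul_mem_right b ha
  rw [eq_top_iff, ← span_mul_span]
  set V := span F ((x ^ ·) '' (range f.natDegree : Set ℕ))
  set W := span F ((y ^ ·) '' (range g.natDegree : Set ℕ))
  calc ⊤ = Subalgebra.toSubmodule (Algebra.adjoin F {x}) * W := by
        rw [← adjoin_pair_eq_adjoin_mul_span_pow hg hgy, hxy, Algebra.top_toSubmodule]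
    _ ≤ (V ⊔ J.restrictScalars F) * W :=
        mul_le_mul_left (adjoin_singleton_le_span_pow_sup hf hfx) _
    _ = V * W ⊔ J.restrictScalars F * W := Submodule.sup_mul _ _ _
    _ ≤ V * W ⊔ J.restrictScalars F := sup_le_sup_left (J_mul_le W) _

lemma span_image_C_sup_eq_top {h : A} {J : Ideal (Polynomial A)}
    (hJ : Polynomial.X - Polynomial.C h ∈ J) {B : Set A}
    (hB : span F B ⊔ (J.comap Polynomial.C).restrictScalars F = ⊤) :
    span F (Polynomial.C '' B) ⊔ J.restrictScalars F = ⊤ := by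
  refine eq_top_iff'.2 fun p => ?_
  obtain ⟨b, hb, r, hr, hbr⟩ := mem_sup.1 (hB ▸ mem_top : p.eval h ∈ _)
  have hCb : Polynomial.C b ∈ span F (Polynomial.C '' B) := by
    simpa [map_span] using
      mem_map_of_mem (f := (Polynomial.CAlgHom (R := F) (A := A)).toLinearMap) hb
  have hsub : p - Polynomial.C (p.eval h) ∈ J :=
    J.mem_of_dvd Polynomial.X_sub_C_dvd_sub_C_eval hJ
  refine mem_sup.2 ⟨_, hCb, _, J.add_mem hsub hr, ?_⟩
  rw [← hbr, Polynomial.C_add]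
  ring

lemma natDegree_X_pow_add_of_degree_lt [Nontrivial F] {n : ℕ} {r : Polynomial F}
    (hr : r.degree < n) : (Polynomial.X ^ n + r).natDegree = n := by
  rw [Polynomial.natDegree_add_eq_left_of_degree_lt (by rwa [Polynomial.degree_X_pow]),
    Polynomial.natDegree_X_pow]

lemma span_pow_mul_pow_sup_eq_top_of_hermitian {q N : ℕ} {x y : A}
    (hxy : Algebra.adjoin F {x, y} = ⊤) (hcurve : x ^ (q + 1) = y ^ q + y) (hq : 1 < q)
    (hN : 1 < N) {J : Ideal A} (hJ : x ^ N - x ∈ J) :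
    span F ((x ^ ·) '' (range N : Set ℕ) * (y ^ ·) '' (range q : Set ℕ)) ⊔
      J.restrictScalars F = ⊤ := by
  nontriviality A
  have := (algebraMap F A).domain_nontrivial
  let a : Algebra.adjoin F {x} := ⟨x, Algebra.self_mem_adjoin_singleton F x⟩
  let f : Polynomial F := .X ^ N + -.X
  let g : Polynomial (Algebra.adjoin F {x}) := .X ^ q + (.X - .C (a ^ (q + 1)))
  have hfx : Polynomial.aeval x f ∈ J := by simpa [f, ← sub_eq_add_neg] using hJ
  have hgy : Polynomial.aeval y g = 0 := by
    have map_a : algebraMap (Algebra.adjoin F {x}) A a = x := rfl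
    simp [g, map_a, hcurve]
  have degree_neg_X : (-.X : Polynomial F).degree < N := by
    rw [Polynomial.degree_neg, Polynomial.degree_X]
    exact_mod_cast hN
  have degree_X_sub_C :
      (.X - .C (a ^ (q + 1)) : Polynomial (Algebra.adjoin F {x})).degree < q := by
    rw [Polynomial.degree_X_sub_C]
    exact_mod_cast hq
  have span_sup := span_pow_mul_pow_sup_eq_top hxy (Polynomial.monic_X_pow_add degree_neg_X) hfx
    (Polynomial.monic_X_pow_add degree_X_sub_C) hgy
  rwa [natDegree_X_pow_add_of_degree_lt degree_neg_X,
    natDegree_X_pow_add_of_degree_lt degree_X_sub_C] at span_sup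

lemma exists_sum_smul_mem_span_pow_of_hermitian [Nontrivial F] {ι : Type*} {q N : ℕ} {x y : A}
    (hxy : Algebra.adjoin F {x, y} = ⊤) (hcurve : x ^ (q + 1) = y ^ q + y) (hq : 1 < q)
    (hN : 1 < N) (h : A) (m : ℕ) (u : ι → Polynomial A) {s : Finset ι}
    (hs : N * q * (m + 1).choose 2 < #s) :
    ∃ c : ι → F, (∃ i ∈ s, c i ≠ 0) ∧ ∑ i ∈ s, c i • u i ∈
      Ideal.span {Polynomial.X - Polynomial.C h, Polynomial.C (x ^ N - x)} ^ m := by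
  classical
  set J := Ideal.span {Polynomial.X - Polynomial.C h, Polynomial.C (x ^ N - x)}
  let B := (range N).image (x ^ ·) * (range q).image (y ^ ·)
  have card_B : #(B.image Polynomial.C) ≤ N * q := calc
    #(B.image Polynomial.C) ≤ #B := card_image_le
    _ ≤ #((range N).image (x ^ ·)) * #((range q).image (y ^ ·)) := card_mul_le
    _ ≤ #(range N) * #(range q) := Nat.mul_le_mul card_image_le card_image_le
    _ = N * q := by rw [card_range, card_range]
  have span_B : span F (B : Set A) ⊔ (J.comap Polynomial.C).restrictScalars F = ⊤ := by
    rw [Finset.coe_mul, coe_image, coe_image]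
    exact span_pow_mul_pow_sup_eq_top_of_hermitian hxy hcurve hq hN
      (Ideal.subset_span (Set.mem_insert_of_mem _ rfl))
  have span_C_B := span_image_C_sup_eq_top (Ideal.subset_span (Set.mem_insert _ _)) span_B
  rw [← coe_image] at span_C_B
  exact exists_sum_smul_mem_span_pair_pow span_C_B m u
    ((Nat.mul_le_mul_right _ card_B).trans_lt hs)

end Ring

end SpanningSets

section HermitianCurve

variable (q : ℕ) (F : Type*) [CommRing F]

/-- The ideal of the affine Hermitian curve `X^(q+1) = Y^q + Y`, with `X = X 0` and `Y = X 1`; its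
quotient is the coordinate ring `R`. -/
noncomputable abbrev hermitianIdeal : Ideal (MvPolynomial (Fin 2) F) :=
  Ideal.span {(X 0 : MvPolynomial (Fin 2) F) ^ (q + 1) - X 1 ^ q - X 1}

lemma mk_hermitianIdeal_X_zero_pow :
    Ideal.Quotient.mk (hermitianIdeal q F) (X 0) ^ (q + 1) =
      Ideal.Quotient.mk (hermitianIdeal q F) (X 1) ^ q +
        Ideal.Quotient.mk (hermitianIdeal q F) (X 1) := by
  rw [← sub_eq_zero, ← sub_sub]
  exact Ideal.Quotient.eq_zero_iff_mem.2 (Ideal.mem_span_singleton_self _)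

variable {F}

lemma adjoin_mk_X_pair_eq_top (K : Ideal (MvPolynomial (Fin 2) F)) :
    Algebra.adjoin F {Ideal.Quotient.mk K (X 0), Ideal.Quotient.mk K (X 1)} = ⊤ := by
  have range_X : Set.range (X : Fin 2 → MvPolynomial (Fin 2) F) = {X 0, X 1} := by
    ext
    simp [eq_comm]
  calc Algebra.adjoin F {Ideal.Quotient.mk K (X 0), Ideal.Quotient.mk K (X 1)}
      = (Algebra.adjoin F {X 0, X 1}).map (Ideal.Quotient.mkₐ F K) := by
        rw [AlgHom.map_adjoin, Set.image_pair]
        rfl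
    _ = (⊤ : Subalgebra F (MvPolynomial (Fin 2) F)).map (Ideal.Quotient.mkₐ F K) := by
        rw [← range_X, adjoin_range_X]
    _ = ⊤ := by
        rw [Algebra.map_top, AlgHom.range_eq_top]
        exact Ideal.Quotient.mkₐ_surjective F K

lemma C_mk_C_mul_mul_eq_smul {σ : Type*} (K : Ideal (MvPolynomial σ F)) (c : F)
    (p : MvPolynomial σ F) (r : Polynomial (MvPolynomial σ F ⧸ K)) :
    Polynomial.C (Ideal.Quotient.mk K (C c * p)) * r =
      c • (Polynomial.C (Ideal.Quotient.mk K p) * r) := by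
  rw [← smul_mul_assoc, Polynomial.smul_C, ← smul_eq_C_mul]
  rfl

end HermitianCurve

theorem stmt_12_general (q : ℕ) (hq : 1 < q) (F : Type*) [CommRing F] [Nontrivial F] (m : ℕ)
    (h : MvPolynomial (Fin 2) F ⧸ hermitianIdeal q F)
    (Ω' : Finset (ℕ × Fin q × ℕ)) (hΩ : q ^ 3 * Nat.choose (m + 1) 2 < Ω'.card) :
    ∃ cf : ℕ × Fin q × ℕ → F,
      (∃ φ ∈ Ω', cf φ ≠ 0) ∧
      (∑ φ ∈ Ω', Polynomial.C (Ideal.Quotient.mk (hermitianIdeal q F)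
            (C (cf φ) * X 0 ^ φ.1 * X 1 ^ (φ.2.1 : ℕ))) * Polynomial.X ^ φ.2.2) ∈
        (Ideal.span
          { Polynomial.X - Polynomial.C h,
            Polynomial.C (Ideal.Quotient.mk (hermitianIdeal q F) (X 0 ^ (q ^ 2) - X 0)) }) ^ m := by
  simp only [mul_assoc (C _), C_mk_C_mul_mul_eq_smul]
  rw [map_sub (Ideal.Quotient.mk _), map_pow (Ideal.Quotient.mk _)]
  exact exists_sum_smul_mem_span_pow_of_hermitian (adjoin_mk_X_pair_eq_top _)
    (mk_hermitianIdeal_X_zero_pow q F) hq (one_lt_pow₀ hq two_ne_zero) h m _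
    (by rwa [← pow_succ])

/-- Let `m ≥ 1` and `v ∈ F^n`. If `Ω'` is a finite set of monomials `x^i y^j z^k` of `R[z]`
(with `0 ≤ j ≤ q−1`) such that `|Ω'| > n·m(m+1)/2`, then there exist coefficients
`c_φ ∈ F`, not all zero, such that `Σ_{φ ∈ Ω'} c_φ φ` lies in `I_{v,m} = ⟨z − h_v, η⟩^m`. -/
theorem stmt_12 (q : ℕ) (hq : IsPrimePow q) (F : Type*) [Field F] [Fintype F] [DecidableEq F]
    (hF : Fintype.card F = q ^ 2)
    (m : ℕ) (hm : 1 ≤ m)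
    (P : Fin (q ^ 3) → F × F)
    (hPinj : Function.Injective P)
    (hPcurve : ∀ i, (P i).1 ^ (q + 1) = (P i).2 ^ q + (P i).2)
    (hPsurj : ∀ a b : F, a ^ (q + 1) = b ^ q + b → ∃ i, P i = (a, b))
    (v : Fin (q ^ 3) → F)
    (Ω' : Finset (ℕ × Fin q × ℕ))
    (hΩ : q ^ 3 * Nat.choose (m + 1) 2 < Ω'.card) :
    ∃ cf : ℕ × Fin q × ℕ → F,
      (∃ φ ∈ Ω', cf φ ≠ 0) ∧
      (∑ φ ∈ Ω', Polynomial.C (Ideal.Quotient.mk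
            (Ideal.span {(X 0 : MvPolynomial (Fin 2) F) ^ (q + 1) - X 1 ^ q - X 1})
            (C (cf φ) * X 0 ^ φ.1 * X 1 ^ (φ.2.1 : ℕ))) *
          Polynomial.X ^ φ.2.2) ∈
        (Ideal.span
          { Polynomial.X - Polynomial.C (Ideal.Quotient.mk
              (Ideal.span {(X 0 : MvPolynomial (Fin 2) F) ^ (q + 1) - X 1 ^ q - X 1})
              (∑ i, C (v i) * Hpoly q (P i).1 (P i).2)),
            Polynomial.C (Ideal.Quotient.mk
              (Ideal.span {(X 0 : MvPolynomial (Fin 2) F) ^ (q + 1) - X 1 ^ q - X 1})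
              ((X 0 : MvPolynomial (Fin 2) F) ^ (q ^ 2) - X 0)) }) ^ m := by
  exact stmt_12_general q hq.one_lt F m _ Ω' hΩ
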